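/- Let m and n be positive integers with n ≥ 4 even, let 0 ≤ ℓ ≤ n−1 be an integer of the same parity as m, and let G = ⟨t, x, y | t² = 1, x^{n/2} = 1, y^m = x^{(ℓ+m)/2}, txt = x⁻¹, tyt = y⁻¹, xy = yx⟩. Then in G the element x has order n/2, the element y has order mn/gcd(n, ℓ+m), and the element x⁻¹y has order mn/gcd(n, ℓ−m). -/

import Mathlib

namespace HTGPaper

/-- The honeycomb toroidal graph `HTG(m,n,ℓ)`. -/
def HTG (m n ℓ : ℕ) : SimpleGraph (ZMod m × ZMod n) :=
  SimpleGraph.fromRel (fun v w =>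
    (v.1 = w.1 ∧ (w.2 = v.2 + 1 ∨ w.2 = v.2 - 1)) ∨
    (v.1.val ≠ m - 1 ∧ w.1 = v.1 + 1 ∧ w.2 = v.2 ∧ v.1.val % 2 ≠ v.2.val % 2) ∨
    (v.1.val = m - 1 ∧ w.1 = 0 ∧ w.2 = v.2 + (ℓ : ZMod n) ∧ v.2.val % 2 = m % 2))

/-- Generators of the generalized dihedral group `G`. -/
inductive Gen | t | x | y

/-- Relators of the presentation of `G`. -/
def rels (m n ℓ : ℕ) : Set (FreeGroup Gen) :=
  {FreeGroup.of Gen.t ^ 2,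
   FreeGroup.of Gen.x ^ (n / 2),
   FreeGroup.of Gen.y ^ m * (FreeGroup.of Gen.x ^ ((ℓ + m) / 2))⁻¹,
   FreeGroup.of Gen.t * FreeGroup.of Gen.x * (FreeGroup.of Gen.t)⁻¹ * FreeGroup.of Gen.x,
   FreeGroup.of Gen.t * FreeGroup.of Gen.y * (FreeGroup.of Gen.t)⁻¹ * FreeGroup.of Gen.y,
   FreeGroup.of Gen.x * FreeGroup.of Gen.y * (FreeGroup.of Gen.x)⁻¹ * (FreeGroup.of Gen.y)⁻¹}

/-- The group `G = ⟨t,x,y | t², x^{n/2}, y^m x^{-(ℓ+m)/2}, txt⁻¹x, tyt⁻¹y, [x,y]⟩`. -/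
abbrev G (m n ℓ : ℕ) : Type := PresentedGroup (rels m n ℓ)

def gent (m n ℓ : ℕ) : G m n ℓ := PresentedGroup.of Gen.t
def genx (m n ℓ : ℕ) : G m n ℓ := PresentedGroup.of Gen.x
def geny (m n ℓ : ℕ) : G m n ℓ := PresentedGroup.of Gen.y

/-- The connection set `{t, tx, ty}`. -/
def S (m n ℓ : ℕ) : Set (G m n ℓ) :=
  {gent m n ℓ, gent m n ℓ * genx m n ℓ, gent m n ℓ * geny m n ℓ}

/-- The Cayley graph of a group with respect to a subset. -/
def cayley (H : Type*) [Group H] (T : Set H) : SimpleGraph H :=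
  SimpleGraph.fromRel (fun g h => ∃ s ∈ T, h = g * s)

/-- The Cayley graph of an additive group with respect to a subset. -/
def addCayley (H : Type*) [AddGroup H] (T : Set H) : SimpleGraph H :=
  SimpleGraph.fromRel (fun g h => ∃ s ∈ T, h = g + s)

/-- `Cay(H;T)` is a normal Cayley graph of `H` if the left regular representation `H_L`
is a normal subgroup of the automorphism group, i.e. every conjugate of a left
translation by a graph automorphism is again a left translation. -/
def IsNormalCayley (H : Type*) [Group H] (T : Set H) : Prop :=
  ∀ (f : cayley H T ≃g cayley H T) (a : H), ∃ b : H,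
    ∀ g : H, f (a * f.symm g) = b * g

/-- An `s`-arc of a graph: `s+1` vertices, consecutive ones adjacent, and any three
consecutive vertices pairwise distinct. -/
def IsSArc {V : Type*} (Γ : SimpleGraph V) (s : ℕ) (p : Fin (s + 1) → V) : Prop :=
  (∀ i : Fin s, Γ.Adj (p i.castSucc) (p i.succ)) ∧
  ∀ i j : Fin (s + 1), (i : ℕ) + 2 = (j : ℕ) → p i ≠ p j

/-- A graph is `s`-arc-transitive if its automorphism group is transitive on `s`-arcs. -/
def IsSArcTransitive {V : Type*} (Γ : SimpleGraph V) (s : ℕ) : Prop :=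
  ∀ p q : Fin (s + 1) → V, IsSArc Γ s p → IsSArc Γ s q →
    ∃ f : Γ ≃g Γ, ∀ i, f (p i) = q i

/-- A graph is `s`-arc-regular if its automorphism group is regular on `s`-arcs. -/
def IsSArcRegular {V : Type*} (Γ : SimpleGraph V) (s : ℕ) : Prop :=
  ∀ p q : Fin (s + 1) → V, IsSArc Γ s p → IsSArc Γ s q →
    ∃! f : Γ ≃g Γ, ∀ i, f (p i) = q i

/-- A graph is arc-transitive if it is `1`-arc-transitive. -/
def IsArcTransitive {V : Type*} (Γ : SimpleGraph V) : Prop :=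
  IsSArcTransitive Γ 1

/-- The generalized prism `GPr(k)`. -/
def GPr (k : ℕ) : SimpleGraph (ZMod 2 × ZMod (2 * k)) :=
  SimpleGraph.fromRel (fun v w =>
    (v.1 = w.1 ∧ (w.2 = v.2 + 1 ∨ w.2 = v.2 - 1)) ∨
    (Even v.2.val ∧ w.1 = v.1 + 1 ∧ w.2 = v.2 + 1))

/-- The cubic graph on `k` vertices given by LCF-type data `f`. -/
def lcfGraph (k : ℕ) (f : ℕ → ℤ) : SimpleGraph (ZMod k) :=
  SimpleGraph.fromRel (fun v w => w = v + 1 ∨ w = v + (f v.val : ZMod k))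

/-- The cube graph `Q₃`, LCF notation `[3,-3]⁴`. -/
def cubeGraph : SimpleGraph (ZMod 8) :=
  lcfGraph 8 (fun i => if i % 2 = 0 then 3 else -3)

/-- The Heawood graph, LCF notation `[5,-5]⁷`. -/
def heawood : SimpleGraph (ZMod 14) :=
  lcfGraph 14 (fun i => if i % 2 = 0 then 5 else -5)

/-- The Möbius–Kantor graph, LCF notation `[5,-5]⁸`. -/
def mobiusKantor : SimpleGraph (ZMod 16) :=
  lcfGraph 16 (fun i => if i % 2 = 0 then 5 else -5)

/-- The Pappus graph, LCF notation `[5,7,-7,7,-7,-5]³`. -/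
def pappus : SimpleGraph (ZMod 18) :=
  lcfGraph 18 (fun i =>
    match i % 6 with
    | 0 => 5 | 1 => 7 | 2 => -7 | 3 => 7 | 4 => -7 | _ => -5)

/-- The red edges of `HTG(m,n,ℓ) = Cay(G;{t,tx,ty})`. -/
def Red (m n ℓ : ℕ) : Set (Sym2 (G m n ℓ)) :=
  {e | ∃ g : G m n ℓ, e = s(g, g * gent m n ℓ)}

/-- The blue edges. -/
def Blue (m n ℓ : ℕ) : Set (Sym2 (G m n ℓ)) :=
  {e | ∃ g : G m n ℓ, e = s(g, g * (gent m n ℓ * genx m n ℓ))}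

/-- The green edges. -/
def Green (m n ℓ : ℕ) : Set (Sym2 (G m n ℓ)) :=
  {e | ∃ g : G m n ℓ, e = s(g, g * (gent m n ℓ * geny m n ℓ))}

/-- The three color classes. -/
def colorClasses (m n ℓ : ℕ) : Set (Set (Sym2 (G m n ℓ))) :=
  {Red m n ℓ, Blue m n ℓ, Green m n ℓ}

/-- An automorphism of `Cay(G;{t,tx,ty})` is color permuting if it preserves the
partition of the edges into the three color classes. -/
def IsColorPermuting {m n ℓ : ℕ}
    (f : cayley (G m n ℓ) (S m n ℓ) ≃g cayley (G m n ℓ) (S m n ℓ)) : Prop :=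
  ∀ C ∈ colorClasses m n ℓ, Sym2.map ⇑f '' C ∈ colorClasses m n ℓ

/-- The group `Aut(H;T)` of automorphisms of `H` fixing `T` setwise. -/
def autFixing (H : Type*) [Group H] (T : Set H) : Subgroup (MulAut H) where
  carrier := {φ | ⇑φ '' T = T}
  one_mem' := by
    show ⇑(1 : MulAut H) '' T = T
    simp
  mul_mem' := by
    intro a b ha hb
    show ⇑(a * b) '' T = T
    have h : ⇑(a * b) = ⇑a ∘ ⇑b := rfl
    rw [h, Set.image_comp]
    rw [show ⇑b '' T = T from hb, show ⇑a '' T = T from ha]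
  inv_mem' := by
    intro a ha
    show ⇑a⁻¹ '' T = T
    conv_lhs => rw [← show ⇑a '' T = T from ha]
    rw [← Set.image_comp]
    have h : ⇑a⁻¹ ∘ ⇑a = id := by
      funext g
      simp
    rw [h, Set.image_id]

/-! The relations of `G` hold in two dihedral groups, with `t ↦ sr 0`: for `x ↦ r 0`, `y ↦ r 1` in
`DihedralGroup m`, and for `x ↦ r m`, `y ↦ r ((ℓ + m) / 2)` in `DihedralGroup (m * (n / 2))`. The
second representation shows that the order of `x` does not drop below `n / 2`. The first one shows
that `m` divides the order of every `x ^ a * y`, and since the `m`-th power of that element is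
`x ^ ((ℓ + m) / 2 + a * m)`, its order is `m` times the order of a power of `x`. -/

theorem orderOf_eq_mul_orderOf_pow_of_dvd {M : Type*} [Monoid M] {g : M} {m : ℕ}
    (h : m ∣ orderOf g) : orderOf g = m * orderOf (g ^ m) := by
  rcases eq_or_ne m 0 with rfl | hm
  · rw [zero_dvd_iff.mp h, zero_mul]
  · rw [orderOf_pow_of_dvd hm h, Nat.mul_div_cancel' h]

theorem orderOf_zpow_of_isOfFinOrder {K : Type*} [Group K] {g : K} (hg : IsOfFinOrder g) (z : ℤ) :
    orderOf (g ^ z) = orderOf g / Int.gcd (orderOf g) z := by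
  obtain ⟨k, rfl | rfl⟩ := z.eq_nat_or_neg
  · rw [zpow_natCast, hg.orderOf_pow, Int.gcd_natCast_natCast]
  · rw [zpow_neg, orderOf_inv, zpow_natCast, hg.orderOf_pow, Int.gcd_neg,
      Int.gcd_natCast_natCast]

theorem orderOf_r_left_factor {m : ℕ} (hm : m ≠ 0) (k : ℕ) :
    orderOf (DihedralGroup.r (m : ZMod (m * k))) = k := by
  have h : m ∣ orderOf (DihedralGroup.r (1 : ZMod (m * k))) := by
    rw [DihedralGroup.orderOf_r_one]
    exact dvd_mul_right m k
  rw [← DihedralGroup.r_one_pow, orderOf_pow_of_dvd hm h, DihedralGroup.orderOf_r_one,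
    Nat.mul_div_cancel_left k (Nat.pos_of_ne_zero hm)]

section Relations

variable (m n ℓ : ℕ)

theorem genx_pow_half : genx m n ℓ ^ (n / 2) = 1 :=
  PresentedGroup.one_of_mem (rels := rels m n ℓ) (x := FreeGroup.of Gen.x ^ (n / 2))
    (by simp [rels])

theorem geny_pow : geny m n ℓ ^ m = genx m n ℓ ^ ((ℓ + m) / 2) :=
  mul_inv_eq_one.mp <| PresentedGroup.one_of_mem (rels := rels m n ℓ)
    (x := FreeGroup.of Gen.y ^ m * (FreeGroup.of Gen.x ^ ((ℓ + m) / 2))⁻¹) (by simp [rels])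

theorem commute_genx_geny : Commute (genx m n ℓ) (geny m n ℓ) :=
  mul_inv_eq_iff_eq_mul.mp <| mul_inv_eq_one.mp <| PresentedGroup.one_of_mem (rels := rels m n ℓ)
    (x := FreeGroup.of Gen.x * FreeGroup.of Gen.y * (FreeGroup.of Gen.x)⁻¹ *
      (FreeGroup.of Gen.y)⁻¹) (by simp [rels])

theorem genx_zpow_mul_geny_pow (a : ℤ) :
    (genx m n ℓ ^ a * geny m n ℓ) ^ m = genx m n ℓ ^ (((ℓ + m) / 2 : ℕ) + a * m : ℤ) := by
  rw [((commute_genx_geny m n ℓ).zpow_left a).mul_pow, geny_pow, ← zpow_natCast, ← zpow_mul,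
    ← zpow_natCast, ← zpow_add, add_comm]

end Relations

section Dihedral

variable {m n ℓ N : ℕ} {u v : ZMod N}

/-- The images of the generators of `G m n ℓ` in a dihedral representation: `t` becomes a
reflection, `x` and `y` become the rotations by `u` and `v`. -/
def dihedralGen (u v : ZMod N) : Gen → DihedralGroup N
  | Gen.t => DihedralGroup.sr 0
  | Gen.x => DihedralGroup.r u
  | Gen.y => DihedralGroup.r v

theorem lift_dihedralGen_eq_one (hu : u * (n / 2 : ℕ) = 0) (hv : v * m = u * ((ℓ + m) / 2 : ℕ)) :
    ∀ r ∈ rels m n ℓ, FreeGroup.lift (dihedralGen u v) r = 1 := by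
  simp only [rels, Set.mem_insert_iff, Set.mem_singleton_iff, forall_eq_or_imp, forall_eq]
  refine ⟨?_, ?_, ?_, ?_, ?_, ?_⟩ <;>
    simp [dihedralGen, sq, hu, hv]

/-- The representation of `G m n ℓ` in `DihedralGroup N` sending `t` to a reflection and `x`, `y` to
the rotations by `u` and `v`; the hypotheses are the two relations among `x` and `y` that do not
already hold for all rotations. -/
def toDihedral (hu : u * (n / 2 : ℕ) = 0) (hv : v * m = u * ((ℓ + m) / 2 : ℕ)) :
    G m n ℓ →* DihedralGroup N :=
  PresentedGroup.toGroup (lift_dihedralGen_eq_one hu hv)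

theorem toDihedral_genx (hu : u * (n / 2 : ℕ) = 0) (hv : v * m = u * ((ℓ + m) / 2 : ℕ)) :
    toDihedral hu hv (genx m n ℓ) = DihedralGroup.r u :=
  PresentedGroup.toGroup.of _

theorem toDihedral_geny (hu : u * (n / 2 : ℕ) = 0) (hv : v * m = u * ((ℓ + m) / 2 : ℕ)) :
    toDihedral hu hv (geny m n ℓ) = DihedralGroup.r v :=
  PresentedGroup.toGroup.of _

end Dihedral

theorem orderOf_genx {m : ℕ} (hm : m ≠ 0) (n ℓ : ℕ) : orderOf (genx m n ℓ) = n / 2 := by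
  refine Nat.dvd_antisymm (orderOf_dvd_of_pow_eq_one (genx_pow_half m n ℓ)) ?_
  have hu : (m : ZMod (m * (n / 2))) * (n / 2 : ℕ) = 0 := by
    rw [← Nat.cast_mul, ZMod.natCast_self]
  have hv : (((ℓ + m) / 2 : ℕ) : ZMod (m * (n / 2))) * m = m * ((ℓ + m) / 2 : ℕ) := mul_comm _ _
  calc n / 2 = orderOf (toDihedral hu hv (genx m n ℓ)) := by
        rw [toDihedral_genx, orderOf_r_left_factor hm]
    _ ∣ orderOf (genx m n ℓ) := orderOf_map_dvd _ _

theorem dvd_orderOf_genx_zpow_mul_geny (m n ℓ : ℕ) (a : ℤ) :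
    m ∣ orderOf (genx m n ℓ ^ a * geny m n ℓ) := by
  have hu : (0 : ZMod m) * (n / 2 : ℕ) = 0 := zero_mul _
  have hv : (1 : ZMod m) * m = 0 * ((ℓ + m) / 2 : ℕ) := by
    rw [ZMod.natCast_self, mul_zero, zero_mul]
  calc m = orderOf (toDihedral hu hv (genx m n ℓ ^ a * geny m n ℓ)) := by
        rw [map_mul, map_zpow, toDihedral_genx, toDihedral_geny, DihedralGroup.r_zero, one_zpow,
          one_mul, DihedralGroup.orderOf_r_one]
    _ ∣ orderOf (genx m n ℓ ^ a * geny m n ℓ) := orderOf_map_dvd _ _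

theorem orderOf_genx_zpow_mul_geny {m n ℓ : ℕ} (hm : 0 < m) (hn : 0 < n) (hne : Even n)
    (hpar : ℓ % 2 = m % 2) (a : ℤ) :
    orderOf (genx m n ℓ ^ a * geny m n ℓ) =
      m * n / Int.gcd (n : ℤ) ((ℓ : ℤ) + (2 * a + 1) * m) := by
  obtain ⟨k, rfl⟩ := hne.two_dvd
  have hk : 2 * k / 2 = k := Nat.mul_div_cancel_left k two_pos
  have hx : orderOf (genx m (2 * k) ℓ) = k := by rw [orderOf_genx hm.ne', hk]
  have hfin : IsOfFinOrder (genx m (2 * k) ℓ) := orderOf_pos_iff.mp (by omega)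
  set z : ℤ := ((ℓ + m) / 2 : ℕ) + a * m
  have hgcd : Int.gcd (2 * k : ℕ) (ℓ + (2 * a + 1) * m) = 2 * Int.gcd k z := by
    have hc : (ℓ : ℤ) + m = 2 * ((ℓ + m) / 2 : ℕ) := by omega
    rw [show (ℓ : ℤ) + (2 * a + 1) * m = 2 * z by linear_combination hc, Nat.cast_mul,
      Nat.cast_ofNat, Int.gcd_mul_left]
    rfl
  calc orderOf (genx m (2 * k) ℓ ^ a * geny m (2 * k) ℓ)
      = m * orderOf (genx m (2 * k) ℓ ^ z) := by
        rw [orderOf_eq_mul_orderOf_pow_of_dvd (dvd_orderOf_genx_zpow_mul_geny m _ ℓ a),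
          genx_zpow_mul_geny_pow]
    _ = m * (k / Int.gcd k z) := by rw [orderOf_zpow_of_isOfFinOrder hfin, hx]
    _ = m * k / Int.gcd k z :=
        (Nat.mul_div_assoc m (Int.natCast_dvd_natCast.mp (Int.gcd_dvd_left _ _))).symm
    _ = m * (2 * k) / Int.gcd (2 * k : ℕ) (ℓ + (2 * a + 1) * m) := by
        rw [hgcd, mul_left_comm, Nat.mul_div_mul_left _ _ two_pos]

theorem statement6_general {m n ℓ : ℕ} (hm : 0 < m) (hn : 0 < n) (hne : Even n)
    (hpar : ℓ % 2 = m % 2) :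
    orderOf (genx m n ℓ) = n / 2 ∧
    ∀ a : ℤ, orderOf (genx m n ℓ ^ a * geny m n ℓ) =
      m * n / Int.gcd (n : ℤ) ((ℓ : ℤ) + (2 * a + 1) * m) :=
  ⟨orderOf_genx hm.ne' n ℓ, orderOf_genx_zpow_mul_geny hm hn hne hpar⟩

/-- The orders of `x`, `y` and `x⁻¹y` in `G` are `n/2`, `mn/gcd(n,ℓ+m)` and
`mn/gcd(n,ℓ-m)` respectively. -/
theorem statement6 (m n ℓ : ℕ) (hm : 0 < m) (hn : 4 ≤ n) (hne : Even n)
    (hl : ℓ ≤ n - 1) (hpar : ℓ % 2 = m % 2) :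
    orderOf (genx m n ℓ) = n / 2 ∧
    orderOf (geny m n ℓ) = m * n / Int.gcd (n : ℤ) ((ℓ : ℤ) + m) ∧
    orderOf ((genx m n ℓ)⁻¹ * geny m n ℓ) = m * n / Int.gcd (n : ℤ) ((ℓ : ℤ) - m) := by
  obtain ⟨hx, hxy⟩ := statement6_general hm (by omega : 0 < n) hne hpar
  exact ⟨hx, by simpa using hxy 0, by simpa [← sub_eq_add_neg] using hxy (-1)⟩

end HTGPaper
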